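/- arXiv:1301.0699 — 3 statements merged into one kernel-verified Lean document; each statement's English description precedes it below -/
import Mathlib

section
/- Let p, q > 1. Then arctan_{p,q}, the inverse function of tan_{p,q}, is increasing and concave on (0,1). -/
open Real Set

/-- `arcsinPQ p q x = ∫₀ˣ (1 - tᵠ)^(-1/p) dt`, the generalized inverse sine. -/
noncomputable def arcsinPQ (p q x : ℝ) : ℝ := ∫ t in (0:ℝ)..x, (1 - t ^ q) ^ (-(1/p))

/-- `sinPQ p q` is the inverse function of `arcsinPQ p q` (restricted to `[0,1]`). -/
noncomputable def sinPQ (p q : ℝ) : ℝ → ℝ := Function.invFunOn (arcsinPQ p q) (Set.Icc 0 1)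

/-- `cosPQ p q x = (1 - sinPQ p q x ^ q)^(1/p)`. -/
noncomputable def cosPQ (p q x : ℝ) : ℝ := (1 - sinPQ p q x ^ q) ^ (1/p)

/-- `tanPQ p q x = sinPQ p q x / cosPQ p q x`. -/
noncomputable def tanPQ (p q x : ℝ) : ℝ := sinPQ p q x / cosPQ p q x

/-- `arctanPQ p q` is the inverse function of `tanPQ p q` (restricted to `(0, π_{p,q}/2)`). -/
noncomputable def arctanPQ (p q : ℝ) : ℝ → ℝ :=
  Function.invFunOn (tanPQ p q) (Set.Ioo 0 (arcsinPQ p q 1))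

/-!
Writing `sin`, `cos`, `tan` for the `(p, q)`-functions on `(0, π_{p,q}/2)`, inverting the integral
gives `sin' = cos`, and differentiating `cos ^ p = 1 - sin ^ q` yields
`tan' = 1 + (q / p) * sin ^ q / cos ^ p`. Since `sin` increases and `cos` decreases, `tan'` is
positive and increasing: `tan` is strictly increasing and convex, and the inverse of such a
function is strictly increasing and concave. The integral converges at `1` because
`1 - t ^ q ≥ min 1 q * (1 - t)`, which for `q ≤ 1` is Bernoulli's inequality.
-/

lemma strictMonoOn_image_of_leftInvOn {α β : Type*} [LinearOrder α] [Preorder β]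
    {f : α → β} {g : β → α} {s : Set α} (hf : MonotoneOn f s) (hg : LeftInvOn g f s) :
    StrictMonoOn g (f '' s) := by
  rintro _ ⟨a, ha, rfl⟩ _ ⟨b, hb, rfl⟩ hab
  rw [hg ha, hg hb]
  exact hf.reflect_lt ha hb hab

lemma concaveOn_image_of_leftInvOn {𝕜 E β : Type*} [Semiring 𝕜] [PartialOrder 𝕜]
    [AddCommMonoid E] [LinearOrder E] [SMul 𝕜 E] [AddCommMonoid β] [PartialOrder β] [SMul 𝕜 β]
    {f : E → β} {g : β → E} {s : Set E} (hf : ConvexOn 𝕜 s f) (hmono : StrictMonoOn f s)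
    (himage : Convex 𝕜 (f '' s)) (hg : LeftInvOn g f s) :
    ConcaveOn 𝕜 (f '' s) g := by
  refine ⟨himage, ?_⟩
  rintro _ ⟨x, hx, rfl⟩ _ ⟨y, hy, rfl⟩ a b ha hb hab
  obtain ⟨z, hz, hfz⟩ := himage (mem_image_of_mem f hx) (mem_image_of_mem f hy) ha hb hab
  rw [← hfz, hg hx, hg hy, hg hz, ← hmono.le_iff_le (hf.1 hx hy ha hb hab) hz, hfz]
  exact hf.2 hx hy ha hb hab

lemma one_sub_rpow_pos {q s : ℝ} (hq : 0 < q) (hs : s ∈ Ico (0 : ℝ) 1) : 0 < 1 - s ^ q :=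
  sub_pos.2 (rpow_lt_one hs.1 hs.2 hq)

lemma min_one_mul_one_sub_le_one_sub_rpow {q s : ℝ} (hq : 0 ≤ q) (hs : s ∈ Icc (0 : ℝ) 1) :
    min 1 q * (1 - s) ≤ 1 - s ^ q := by
  rcases le_total q 1 with hq1 | hq1
  · have bernoulli := rpow_one_add_le_one_add_mul_self (s := s - 1) (by linarith [hs.1]) hq hq1
    rw [add_sub_cancel] at bernoulli
    rw [min_eq_right hq1]
    linarith
  · have := rpow_le_self_of_le_one hs.1 hs.2 hq1
    rw [min_eq_left hq1]
    linarith

section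

variable {p q : ℝ}

lemma continuous_one_sub_rpow_rpow {r : ℝ} (hq : 0 ≤ q) (hr : 0 ≤ r) :
    Continuous fun t : ℝ => (1 - t ^ q) ^ r :=
  (continuous_const.sub (continuous_id.rpow_const fun _ => Or.inr hq)).rpow_const
    fun _ => Or.inr hr

lemma intervalIntegrable_one_sub_rpow_rpow {r : ℝ} (hq : 0 < q) (hr : -1 < r) :
    IntervalIntegrable (fun t : ℝ => (1 - t ^ q) ^ r) MeasureTheory.volume 0 1 := by
  rcases le_total 0 r with hr0 | hr0
  · exact (continuous_one_sub_rpow_rpow hq.le hr0).intervalIntegrable 0 1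
  have hmin : 0 < min 1 q := lt_min one_pos hq
  have hdom : IntervalIntegrable (fun t : ℝ => min 1 q ^ r * (1 - t) ^ r)
      MeasureTheory.volume 0 1 := by
    have h := (intervalIntegral.intervalIntegrable_rpow' (a := 1) (b := 0) hr).comp_sub_left 1
    simp only [sub_self, sub_zero] at h
    exact h.const_mul _
  refine hdom.mono_fun (Measurable.aestronglyMeasurable (by fun_prop)) ?_
  rw [uIoc_of_le zero_le_one, ← MeasureTheory.restrict_Ioo_eq_restrict_Ioc]
  filter_upwards [MeasureTheory.ae_restrict_mem measurableSet_Ioo] with t ht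
  have ht1 : 0 < 1 - t := sub_pos.2 ht.2
  have hpos := one_sub_rpow_pos hq (Ioo_subset_Ico_self ht)
  rw [← mul_rpow hmin.le ht1.le, norm_of_nonneg (by positivity), norm_of_nonneg (by positivity)]
  exact rpow_le_rpow_of_nonpos (by positivity)
    (min_one_mul_one_sub_le_one_sub_rpow hq.le (Ioo_subset_Icc_self ht)) hr0

lemma intervalIntegrable_arcsinPQ_integrand (hp : 1 < p) (hq : 0 < q) :
    IntervalIntegrable (fun t : ℝ => (1 - t ^ q) ^ (-(1/p))) MeasureTheory.volume 0 1 :=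
  intervalIntegrable_one_sub_rpow_rpow hq (neg_lt_neg ((div_lt_one (one_pos.trans hp)).2 hp))

lemma arcsinPQ_zero (p q : ℝ) : arcsinPQ p q 0 = 0 := intervalIntegral.integral_same

lemma continuousOn_arcsinPQ (hp : 1 < p) (hq : 0 < q) :
    ContinuousOn (arcsinPQ p q) (Icc 0 1) := by
  rw [← uIcc_of_le (zero_le_one' ℝ)]
  exact intervalIntegral.continuousOn_primitive_interval'
    (intervalIntegrable_arcsinPQ_integrand hp hq) left_mem_uIcc

lemma hasDerivAt_arcsinPQ {s : ℝ} (hp : 1 < p) (hq : 0 < q) (hs : s ∈ Ioo (0 : ℝ) 1) :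
    HasDerivAt (arcsinPQ p q) ((1 - s ^ q) ^ (-(1/p))) s := by
  have hpos := one_sub_rpow_pos hq (Ioo_subset_Ico_self hs)
  refine intervalIntegral.integral_hasDerivAt_right
    ((intervalIntegrable_arcsinPQ_integrand hp hq).mono_set ?_)
    (Measurable.stronglyMeasurable (by fun_prop)).stronglyMeasurableAtFilter ?_
  · exact uIcc_subset_uIcc_left (by simpa using Ioo_subset_Icc_self hs)
  · exact (continuousAt_const.sub
      (continuousAt_id.rpow_const (Or.inl hs.1.ne'))).rpow_const (Or.inl hpos.ne')

lemma strictMonoOn_arcsinPQ (hp : 1 < p) (hq : 0 < q) :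
    StrictMonoOn (arcsinPQ p q) (Icc 0 1) := by
  refine strictMonoOn_of_hasDerivWithinAt_pos (f' := fun s => (1 - s ^ q) ^ (-(1/p)))
    (convex_Icc 0 1) (continuousOn_arcsinPQ hp hq) ?_ ?_ <;> rw [interior_Icc] <;> intro s hs
  · exact (hasDerivAt_arcsinPQ hp hq hs).hasDerivWithinAt
  · exact rpow_pos_of_pos (one_sub_rpow_pos hq (Ioo_subset_Ico_self hs)) _

lemma image_arcsinPQ_Ioo (hp : 1 < p) (hq : 0 < q) :
    arcsinPQ p q '' Ioo 0 1 = Ioo 0 (arcsinPQ p q 1) := by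
  have himage := (strictMonoOn_arcsinPQ hp hq).image_Ioo_subset.antisymm
    (intermediate_value_Ioo zero_le_one (continuousOn_arcsinPQ hp hq))
  rwa [arcsinPQ_zero] at himage

lemma leftInvOn_sinPQ (hp : 1 < p) (hq : 0 < q) :
    LeftInvOn (sinPQ p q) (arcsinPQ p q) (Icc 0 1) :=
  (strictMonoOn_arcsinPQ hp hq).injOn.leftInvOn_invFunOn

lemma image_sinPQ_Ioo (hp : 1 < p) (hq : 0 < q) :
    sinPQ p q '' Ioo 0 (arcsinPQ p q 1) = Ioo 0 1 := by
  rw [← image_arcsinPQ_Ioo hp hq]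
  exact ((leftInvOn_sinPQ hp hq).mono Ioo_subset_Icc_self).image_image

lemma sinPQ_mem_Ioo {x : ℝ} (hp : 1 < p) (hq : 0 < q) (hx : x ∈ Ioo 0 (arcsinPQ p q 1)) :
    sinPQ p q x ∈ Ioo 0 1 :=
  image_sinPQ_Ioo hp hq ▸ mem_image_of_mem _ hx

lemma arcsinPQ_sinPQ {x : ℝ} (hp : 1 < p) (hq : 0 < q) (hx : x ∈ Ioo 0 (arcsinPQ p q 1)) :
    arcsinPQ p q (sinPQ p q x) = x := by
  rw [← image_arcsinPQ_Ioo hp hq] at hx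
  exact ((leftInvOn_sinPQ hp hq).mono Ioo_subset_Icc_self).rightInvOn_image hx

lemma strictMonoOn_sinPQ (hp : 1 < p) (hq : 0 < q) :
    StrictMonoOn (sinPQ p q) (Ioo 0 (arcsinPQ p q 1)) := by
  rw [← image_arcsinPQ_Ioo hp hq]
  exact strictMonoOn_image_of_leftInvOn
    ((strictMonoOn_arcsinPQ hp hq).monotoneOn.mono Ioo_subset_Icc_self)
    ((leftInvOn_sinPQ hp hq).mono Ioo_subset_Icc_self)

lemma cosPQ_pos {x : ℝ} (hp : 1 < p) (hq : 0 < q) (hx : x ∈ Ioo 0 (arcsinPQ p q 1)) :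
    0 < cosPQ p q x :=
  rpow_pos_of_pos (one_sub_rpow_pos hq (Ioo_subset_Ico_self (sinPQ_mem_Ioo hp hq hx))) _

lemma antitoneOn_cosPQ (hp : 1 < p) (hq : 0 < q) :
    AntitoneOn (cosPQ p q) (Ioo 0 (arcsinPQ p q 1)) := by
  intro x hx y hy hxy
  have hsin := (strictMonoOn_sinPQ hp hq).monotoneOn hx hy hxy
  have hsin_pos := (sinPQ_mem_Ioo hp hq hx).1
  have hpos := one_sub_rpow_pos hq (Ioo_subset_Ico_self (sinPQ_mem_Ioo hp hq hy))
  unfold cosPQ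
  gcongr

lemma continuousAt_sinPQ {x : ℝ} (hp : 1 < p) (hq : 0 < q) (hx : x ∈ Ioo 0 (arcsinPQ p q 1)) :
    ContinuousAt (sinPQ p q) x := by
  refine (strictMonoOn_sinPQ hp hq).continuousAt_of_image_mem_nhds (isOpen_Ioo.mem_nhds hx) ?_
  rw [image_sinPQ_Ioo hp hq]
  exact isOpen_Ioo.mem_nhds (sinPQ_mem_Ioo hp hq hx)

lemma hasDerivAt_sinPQ {x : ℝ} (hp : 1 < p) (hq : 0 < q) (hx : x ∈ Ioo 0 (arcsinPQ p q 1)) :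
    HasDerivAt (sinPQ p q) (cosPQ p q x) x := by
  have hsin := sinPQ_mem_Ioo hp hq hx
  have hpos := one_sub_rpow_pos hq (Ioo_subset_Ico_self hsin)
  have hinv := HasDerivAt.of_local_left_inverse (continuousAt_sinPQ hp hq hx)
    (hasDerivAt_arcsinPQ hp hq hsin) (rpow_pos_of_pos hpos _).ne'
    (Filter.eventually_of_mem (isOpen_Ioo.mem_nhds hx) fun y hy => arcsinPQ_sinPQ hp hq hy)
  rwa [rpow_neg hpos.le, inv_inv] at hinv

lemma hasDerivAt_cosPQ {x : ℝ} (hp : 1 < p) (hq : 0 < q) (hx : x ∈ Ioo 0 (arcsinPQ p q 1)) :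
    HasDerivAt (cosPQ p q)
      (-(q / p * sinPQ p q x ^ (q - 1) * cosPQ p q x ^ (2 - p))) x := by
  have hsin := sinPQ_mem_Ioo hp hq hx
  have hpos := one_sub_rpow_pos hq (Ioo_subset_Ico_self hsin)
  have hp0 : p ≠ 0 := by linarith
  have hbase := ((hasDerivAt_sinPQ hp hq hx).rpow_const (p := q) (Or.inl hsin.1.ne')).const_sub 1
  refine (hbase.rpow_const (p := 1 / p) (Or.inl hpos.ne')).congr_deriv ?_
  have hpow : (1 - sinPQ p q x ^ q) ^ (1 / p - 1) = cosPQ p q x ^ (1 - p) := by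
    rw [cosPQ, ← rpow_mul hpos.le]
    congr 1
    field_simp
  have hcos : cosPQ p q x ^ (2 - p) = cosPQ p q x * cosPQ p q x ^ (1 - p) := by
    rw [show 2 - p = 1 + (1 - p) by ring, rpow_add (cosPQ_pos hp hq hx), rpow_one]
  rw [hpow, hcos]
  ring

lemma hasDerivAt_tanPQ {x : ℝ} (hp : 1 < p) (hq : 0 < q) (hx : x ∈ Ioo 0 (arcsinPQ p q 1)) :
    HasDerivAt (tanPQ p q) (1 + q / p * (sinPQ p q x ^ q / cosPQ p q x ^ p)) x := by
  have hsin := (sinPQ_mem_Ioo hp hq hx).1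
  have hcos := cosPQ_pos hp hq hx
  refine ((hasDerivAt_sinPQ hp hq hx).div (hasDerivAt_cosPQ hp hq hx) hcos.ne').congr_deriv ?_
  rw [rpow_sub_one hsin.ne', rpow_sub hcos, rpow_two]
  field_simp
  ring

lemma strictMonoOn_tanPQ (hp : 1 < p) (hq : 0 < q) :
    StrictMonoOn (tanPQ p q) (Ioo 0 (arcsinPQ p q 1)) := by
  refine strictMonoOn_of_deriv_pos (convex_Ioo _ _)
    (fun x hx => (hasDerivAt_tanPQ hp hq hx).continuousAt.continuousWithinAt) ?_
  rw [interior_Ioo]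
  intro x hx
  have hsin := (sinPQ_mem_Ioo hp hq hx).1
  have hcos := cosPQ_pos hp hq hx
  rw [(hasDerivAt_tanPQ hp hq hx).deriv]
  positivity

lemma monotoneOn_deriv_tanPQ (hp : 1 < p) (hq : 0 < q) :
    MonotoneOn (deriv (tanPQ p q)) (Ioo 0 (arcsinPQ p q 1)) := by
  intro x hx y hy hxy
  have hsin_pos := (sinPQ_mem_Ioo hp hq hx).1
  have hsin_pow := rpow_nonneg (sinPQ_mem_Ioo hp hq hy).1.le q
  have hcos_pos := cosPQ_pos hp hq hy
  have hsin := (strictMonoOn_sinPQ hp hq).monotoneOn hx hy hxy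
  have hcos := antitoneOn_cosPQ hp hq hx hy hxy
  rw [(hasDerivAt_tanPQ hp hq hx).deriv, (hasDerivAt_tanPQ hp hq hy).deriv]
  gcongr

lemma convexOn_tanPQ (hp : 1 < p) (hq : 0 < q) :
    ConvexOn ℝ (Ioo 0 (arcsinPQ p q 1)) (tanPQ p q) := by
  refine MonotoneOn.convexOn_of_deriv (convex_Ioo _ _)
    (fun x hx => (hasDerivAt_tanPQ hp hq hx).continuousAt.continuousWithinAt) ?_ ?_ <;>
    rw [interior_Ioo]
  · exact fun x hx => (hasDerivAt_tanPQ hp hq hx).differentiableAt.differentiableWithinAt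
  · exact monotoneOn_deriv_tanPQ hp hq

lemma exists_eq_mul_one_sub_rpow_rpow {u r : ℝ} (hq : 0 < q) (hr : 0 < r) (hu : 0 < u) :
    ∃ s ∈ Ioo (0 : ℝ) 1, s = u * (1 - s ^ q) ^ r := by
  have hcont : Continuous fun s : ℝ => s - u * (1 - s ^ q) ^ r :=
    continuous_id.sub (continuous_const.mul (continuous_one_sub_rpow_rpow hq.le hr.le))
  obtain ⟨s, hs, hzero⟩ := intermediate_value_Ioo (zero_le_one' ℝ) hcont.continuousOn
    (show (0 : ℝ) ∈ Ioo _ _ by simp [hu, hq.ne', hr.ne'])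
  exact ⟨s, hs, sub_eq_zero.1 hzero⟩

lemma image_tanPQ_Ioo (hp : 1 < p) (hq : 0 < q) :
    tanPQ p q '' Ioo 0 (arcsinPQ p q 1) = Ioi 0 := by
  refine Subset.antisymm ?_ fun u hu => ?_
  · rintro _ ⟨x, hx, rfl⟩
    exact div_pos (sinPQ_mem_Ioo hp hq hx).1 (cosPQ_pos hp hq hx)
  · obtain ⟨s, hs, hsu⟩ := exists_eq_mul_one_sub_rpow_rpow (r := 1 / p) hq (by positivity) hu
    have hx : arcsinPQ p q s ∈ Ioo 0 (arcsinPQ p q 1) :=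
      image_arcsinPQ_Ioo hp hq ▸ mem_image_of_mem _ hs
    refine ⟨_, hx, (div_eq_iff (cosPQ_pos hp hq hx).ne').2 ?_⟩
    rwa [cosPQ, leftInvOn_sinPQ hp hq (Ioo_subset_Icc_self hs)]

lemma leftInvOn_arctanPQ (hp : 1 < p) (hq : 0 < q) :
    LeftInvOn (arctanPQ p q) (tanPQ p q) (Ioo 0 (arcsinPQ p q 1)) :=
  (strictMonoOn_tanPQ hp hq).injOn.leftInvOn_invFunOn

end

theorem arctanPQ_strictMono_concave_general (p q : ℝ) (hp : 1 < p) (hq : 0 < q) :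
    StrictMonoOn (arctanPQ p q) (Ioi 0) ∧ ConcaveOn ℝ (Ioi 0) (arctanPQ p q) := by
  have hmono := strictMonoOn_tanPQ hp hq
  have hinv := leftInvOn_arctanPQ hp hq
  have himage := image_tanPQ_Ioo hp hq
  rw [← himage]
  exact ⟨strictMonoOn_image_of_leftInvOn hmono.monotoneOn hinv,
    concaveOn_image_of_leftInvOn (convexOn_tanPQ hp hq) hmono (himage ▸ convex_Ioi 0) hinv⟩

theorem arctanPQ_strictMono_concave (p q : ℝ) (hp : 1 < p) (hq : 1 < q) :
    StrictMonoOn (arctanPQ p q) (Set.Ioo 0 1) ∧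
      ConcaveOn ℝ (Set.Ioo 0 1) (arctanPQ p q) :=
  (arctanPQ_strictMono_concave_general p q hp (one_pos.trans hq)).imp
    (·.mono Ioo_subset_Ioi_self) (·.subset Ioo_subset_Ioi_self (convex_Ioo 0 1))
end

section
/- Let p, q > 1 and a ≥ 0. Then the function f : (0,1) → ℝ defined by f(x) = (arcsin_{p,q}(x)/x)^a · (1 - x^q)^{-1/p} is increasing on (0,1). -/
open Real Set

/-!
The quotient `arcsinPQ p q x / x` is the average over `[0, x]` of the increasing integrand
`(1 - t ^ q) ^ (-(1 / p))`. Rescaling to the fixed interval `[0, 1]` shows that averages of an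
increasing function increase with the endpoint. Hence the function in question is a product of two
nonnegative increasing functions.
-/

open AffineMap MeasureTheory

theorem interval_average_eq_integral_lineMap {E : Type*} [NormedAddCommGroup E] [NormedSpace ℝ E]
    (f : ℝ → E) {a b : ℝ} (hab : a ≠ b) :
    ⨍ t in a..b, f t = ∫ s in (0 : ℝ)..1, f (lineMap a b s) := by
  simp only [lineMap_apply_ring', mul_comm _ (b - a)]
  rw [interval_average_eq, intervalIntegral.integral_comp_mul_add f (sub_ne_zero.2 hab.symm)]
  simp only [mul_zero, zero_add, mul_one, sub_add_cancel]

theorem monotoneOn_interval_average {f : ℝ → ℝ} {s : Set ℝ} {a : ℝ} (hf : MonotoneOn f s)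
    (hs : Convex ℝ s) (ha : a ∈ s) :
    MonotoneOn (fun x => ⨍ t in a..x, f t) (s \ {a}) := by
  rintro x ⟨hx, hxa⟩ y ⟨hy, hya⟩ hxy
  have intervalIntegrable_lineMap {z : ℝ} (hz : z ∈ s) :
      IntervalIntegrable (fun r => f (lineMap a z r)) volume 0 1 := by
    have hmaps : MapsTo (lineMap a z) (uIcc (0 : ℝ) 1) s := by
      simpa only [uIcc_of_le zero_le_one] using hs.mapsTo_lineMap ha hz
    rcases le_total a z with haz | hza
    · exact (hf.comp ((lineMap_mono haz).monotoneOn _) hmaps).intervalIntegrable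
    · exact (hf.comp_AntitoneOn ((lineMap_anti hza).antitoneOn _) hmaps).intervalIntegrable
  simp only [interval_average_eq_integral_lineMap f (Ne.symm hxa),
    interval_average_eq_integral_lineMap f (Ne.symm hya)]
  exact intervalIntegral.integral_mono_on zero_le_one (intervalIntegrable_lineMap hx)
    (intervalIntegrable_lineMap hy) fun r hr =>
      hf (hs.lineMap_mem ha hx hr) (hs.lineMap_mem ha hy hr) (lineMap_mono_right hxy hr.1)

theorem one_sub_rpow_rpow_nonneg {q t : ℝ} (hq : 0 ≤ q) (ht : t ∈ Icc 0 1) (r : ℝ) :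
    0 ≤ (1 - t ^ q) ^ r :=
  rpow_nonneg (sub_nonneg.2 (rpow_le_one ht.1 ht.2 hq)) r

theorem monotoneOn_one_sub_rpow_rpow {q r : ℝ} (hq : 0 < q) (hr : r ≤ 0) :
    MonotoneOn (fun t : ℝ => (1 - t ^ q) ^ r) (Ico 0 1) := by
  intro x hx y hy hxy
  have hpow : x ^ q ≤ y ^ q := rpow_le_rpow hx.1 hxy hq.le
  have hy_pos : 0 < 1 - y ^ q := sub_pos.2 (rpow_lt_one hy.1 hy.2 hq)
  exact rpow_le_rpow_of_nonpos hy_pos (sub_le_sub_left hpow 1) hr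

theorem arcsinPQ_div_eq_interval_average (p q x : ℝ) :
    arcsinPQ p q x / x = ⨍ t in (0 : ℝ)..x, (1 - t ^ q) ^ (-(1 / p)) := by
  rw [interval_average_eq_div, sub_zero, arcsinPQ]

theorem arcsinPQ_nonneg (p : ℝ) {q x : ℝ} (hq : 0 ≤ q) (hx : x ∈ Icc 0 1) :
    0 ≤ arcsinPQ p q x :=
  intervalIntegral.integral_nonneg hx.1 fun _ ht =>
    one_sub_rpow_rpow_nonneg hq ⟨ht.1, ht.2.trans hx.2⟩ _

theorem monotoneOn_arcsinPQ_div {p q : ℝ} (hp : 0 < p) (hq : 0 < q) :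
    MonotoneOn (fun x => arcsinPQ p q x / x) (Ioo 0 1) := by
  have hintegrand := monotoneOn_one_sub_rpow_rpow hq (neg_nonpos.2 (one_div_pos.2 hp).le)
  simpa only [arcsinPQ_div_eq_interval_average, Ico_sdiff_left] using
    monotoneOn_interval_average hintegrand (convex_Ico 0 1) (left_mem_Ico.2 zero_lt_one)

theorem arcsinPQ_aux_monotone_general {p q a : ℝ} (hp : 0 < p) (hq : 0 < q) (ha : 0 ≤ a) :
    MonotoneOn (fun x => (arcsinPQ p q x / x) ^ a * (1 - x ^ q) ^ (-(1 / p))) (Ioo 0 1) := by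
  have quotient_nonneg {x : ℝ} (hx : x ∈ Ioo 0 1) : 0 ≤ arcsinPQ p q x / x :=
    div_nonneg (arcsinPQ_nonneg p hq.le (Ioo_subset_Icc_self hx)) hx.1.le
  have quotient_rpow_mono : MonotoneOn (fun x => (arcsinPQ p q x / x) ^ a) (Ioo 0 1) :=
    (monotoneOn_rpow_Ici_of_exponent_nonneg ha).comp (monotoneOn_arcsinPQ_div hp hq)
      fun _ hx => quotient_nonneg hx
  have integrand_mono : MonotoneOn (fun x : ℝ => (1 - x ^ q) ^ (-(1 / p))) (Ioo 0 1) :=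
    (monotoneOn_one_sub_rpow_rpow hq (neg_nonpos.2 (one_div_pos.2 hp).le)).mono
      Ioo_subset_Ico_self
  exact quotient_rpow_mono.mul integrand_mono (fun _ hx => rpow_nonneg (quotient_nonneg hx) a)
    fun _ hx => one_sub_rpow_rpow_nonneg hq.le (Ioo_subset_Icc_self hx) _

theorem arcsinPQ_aux_monotone (p q a : ℝ) (hp : 1 < p) (hq : 1 < q) (ha : 0 ≤ a) :
    MonotoneOn (fun x => (arcsinPQ p q x / x) ^ a * (1 - x ^ q) ^ (-(1/p)))
      (Set.Ioo (0:ℝ) 1) := by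
  exact arcsinPQ_aux_monotone_general (zero_lt_one.trans hp) (zero_lt_one.trans hq) ha
end

section
/- Let p, q > 1 and a ≥ 0. Then the function g : (0,∞) → ℝ defined by g(x) = (arsinh_{p,q}(x)/x)^a · (1 + x^q)^{-1/p} is decreasing on (0,∞). -/
open Real Set

/-- `arsinhPQ p q x = ∫₀ˣ (1 + tᵠ)^(-1/p) dt`, the generalized inverse hyperbolic sine. -/
noncomputable def arsinhPQ (p q x : ℝ) : ℝ := ∫ t in (0:ℝ)..x, (1 + t ^ q) ^ (-(1/p))

/-!
The quotient `arsinhPQ p q x / x` is the average over `[0, x]` of the decreasing density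
`t ↦ (1 + tᵠ)^(-1/p)`. Rescaling to `[0, 1]` shows that the running average of a decreasing
function is decreasing, and products of nonnegative decreasing functions are decreasing.
-/

open MeasureTheory

theorem interval_average_eq_integral_zero_one {E : Type*} [NormedAddCommGroup E]
    [NormedSpace ℝ E] (f : ℝ → E) {a b : ℝ} (hab : a ≠ b) :
    ⨍ t in a..b, f t = ∫ s in (0:ℝ)..1, f (a + (b - a) * s) := by
  rw [intervalIntegral.integral_comp_add_mul f (sub_ne_zero.2 hab.symm) a, mul_zero, add_zero,
    mul_one, add_sub_cancel, interval_average_eq]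

theorem intervalIntegrable_comp_add_mul_zero_one {E : Type*} [NormedAddCommGroup E]
    {f : ℝ → E} {a b : ℝ} (hf : IntervalIntegrable f volume a b) :
    IntervalIntegrable (fun s => f (a + (b - a) * s)) volume 0 1 := by
  rcases eq_or_ne a b with rfl | hab
  · simp
  · have hba : b - a ≠ 0 := sub_ne_zero.2 hab.symm
    simpa [hba] using (hf.comp_add_left a).comp_mul_left (c := b - a)

section RunningAverage

variable {f : ℝ → ℝ} {a : ℝ}

theorem antitoneOn_interval_average (hf : AntitoneOn f (Ioi a))
    (hint : ∀ x ∈ Ioi a, IntervalIntegrable f volume a x) :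
    AntitoneOn (fun x => ⨍ t in a..x, f t) (Ioi a) := by
  intro x hx y hy hxy
  simp only [interval_average_eq_integral_zero_one f (ne_of_lt hx),
    interval_average_eq_integral_zero_one f (ne_of_lt hy)]
  have mem_Ioi_of_mem {z s : ℝ} (hz : z ∈ Ioi a) (hs : s ∈ Ioo (0:ℝ) 1) :
      a + (z - a) * s ∈ Ioi a :=
    lt_add_of_pos_right a (mul_pos (sub_pos.2 hz) hs.1)
  refine intervalIntegral.integral_mono_on_of_le_Ioo zero_le_one
    (intervalIntegrable_comp_add_mul_zero_one (hint y hy))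
    (intervalIntegrable_comp_add_mul_zero_one (hint x hx)) fun s hs => ?_
  refine hf (mem_Ioi_of_mem hx hs) (mem_Ioi_of_mem hy hs) ?_
  have hs₀ : 0 ≤ s := hs.1.le
  gcongr

theorem interval_average_nonneg {b : ℝ} (hf : ∀ t ∈ uIoc a b, 0 ≤ f t) :
    0 ≤ ⨍ t in a..b, f t := by
  rw [setAverage_eq]
  exact smul_nonneg (by positivity) (setIntegral_nonneg measurableSet_uIoc hf)

theorem antitoneOn_interval_average_rpow_mul (hf : AntitoneOn f (Ioi a))
    (hint : ∀ x ∈ Ioi a, IntervalIntegrable f volume a x) (hf₀ : ∀ x ∈ Ioi a, 0 ≤ f x)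
    {r : ℝ} (hr : 0 ≤ r) :
    AntitoneOn (fun x => (⨍ t in a..x, f t) ^ r * f x) (Ioi a) := by
  have average_nonneg {x : ℝ} (hx : x ∈ Ioi a) : 0 ≤ ⨍ t in a..x, f t :=
    interval_average_nonneg fun t ht => hf₀ t (uIoc_of_le (mem_Ioi.1 hx).le ▸ ht).1
  intro x hx y hy hxy
  exact mul_le_mul
    (rpow_le_rpow (average_nonneg hy) (antitoneOn_interval_average hf hint hx hy hxy) hr)
    (hf hx hy hxy) (hf₀ y hy) (rpow_nonneg (average_nonneg hx) r)

end RunningAverage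

theorem antitoneOn_one_add_rpow_rpow {q r : ℝ} (hq : 0 ≤ q) (hr : r ≤ 0) :
    AntitoneOn (fun t : ℝ => (1 + t ^ q) ^ r) (Ici 0) := by
  intro x hx y _ hxy
  have hx₀ : 0 ≤ x := hx
  refine rpow_le_rpow_of_nonpos (by positivity) ?_ hr
  gcongr

theorem arsinhPQ_div_self (p q x : ℝ) :
    arsinhPQ p q x / x = ⨍ t in (0:ℝ)..x, (1 + t ^ q) ^ (-(1/p)) := by
  rw [interval_average_eq_div, sub_zero, arsinhPQ]

theorem arsinhPQ_aux_antitone_general {p q a : ℝ} (hp : 0 < p) (hq : 0 ≤ q) (ha : 0 ≤ a) :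
    AntitoneOn (fun x => (arsinhPQ p q x / x) ^ a * (1 + x ^ q) ^ (-(1/p))) (Ioi (0:ℝ)) := by
  have hanti : AntitoneOn (fun t : ℝ => (1 + t ^ q) ^ (-(1/p))) (Ici 0) :=
    antitoneOn_one_add_rpow_rpow hq (neg_nonpos.2 (by positivity))
  simp only [arsinhPQ_div_self]
  refine antitoneOn_interval_average_rpow_mul (hanti.mono Ioi_subset_Ici_self)
    (fun x hx => ?integrable) (fun x hx => ?nonneg) ha
  case integrable =>
    have hsub : uIcc 0 x ⊆ Ici 0 := uIcc_of_le (mem_Ioi.1 hx).le ▸ Icc_subset_Ici_self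
    exact (hanti.mono hsub).intervalIntegrable
  case nonneg =>
    have hx₀ : 0 < x := hx
    positivity

theorem arsinhPQ_aux_antitone (p q a : ℝ) (hp : 1 < p) (hq : 1 < q) (ha : 0 ≤ a) :
    AntitoneOn (fun x => (arsinhPQ p q x / x) ^ a * (1 + x ^ q) ^ (-(1/p)))
      (Set.Ioi (0:ℝ)) :=
  arsinhPQ_aux_antitone_general (zero_lt_one.trans hp) (zero_le_one.trans hq.le) ha
end
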